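/- Let σ and w be Radon measures on ℝ, and let I and J be finite intervals with I ⊆ (3J)^c. Then ∬_{I×J} |x−y|⁻¹ dσ(y) dw(x) ≤ (3/2) [w,σ]_{A₂}* σ(I)^{1/2} w(J)^{1/2}. -/

import Mathlib

/-! Let `c` be the centre of `J`. For `x ∈ J` and `y ∉ 3J` one has `|x - c| ≤ |y - c| / 3`, hence
`|x - y|⁻¹ ≤ (3/2) |y - c|⁻¹` (`kernel_bound`). The double integral is therefore at most
`(3/2) w(J) ∫_I |y - c|⁻¹ dσ`. Cauchy–Schwarz against the constant `1` bounds the last integral by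
`(∫_I (y - c)⁻² dσ)^{1/2} σ(I)^{1/2}`, and since `I ⊆ Jᶜ` the `A₂` condition on `J` absorbs one
factor `w(J)^{1/2}`. -/

open MeasureTheory Set
open scoped ENNReal

noncomputable section

/-- The Muckenhoupt–Poisson `A₂` condition `[w,σ]_{A₂}* ≤ A`: for every finite interval `J`
with center `c_J`, `w(J) ∫_{Jᶜ} (y - c_J)⁻² dσ(y) ≤ A²`. -/
def A2star (w σ : Measure ℝ) (A : ℝ) : Prop :=
  ∀ J : Set ℝ, J.OrdConnected → Bornology.IsBounded J →
    w J * ∫⁻ y in Jᶜ, ENNReal.ofReal (((y - (sInf J + sSup J) / 2) ^ 2)⁻¹) ∂σ ≤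
      ENNReal.ofReal (A ^ 2)

theorem kernel_bound {a b x y : ℝ} (hax : a ≤ x) (hxb : x ≤ b)
    (hy : (3 / 2) * (b - a) < |y - (a + b) / 2|) :
    |x - y|⁻¹ ≤ (3 / 2) * |y - (a + b) / 2|⁻¹ := by
  have hpos : 0 < |y - (a + b) / 2| := by linarith
  have hx : |x - (a + b) / 2| ≤ (b - a) / 2 := by
    rw [abs_le]; constructor <;> linarith
  have htri : |y - (a + b) / 2| ≤ |x - y| + |x - (a + b) / 2| := by
    have h := abs_sub_le y x ((a + b) / 2)
    rwa [abs_sub_comm y x] at h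
  have hlow : (2 / 3) * |y - (a + b) / 2| ≤ |x - y| := by linarith
  calc |x - y|⁻¹ ≤ ((2 / 3) * |y - (a + b) / 2|)⁻¹ := inv_anti₀ (by positivity) hlow
    _ = (3 / 2) * |y - (a + b) / 2|⁻¹ := by rw [mul_inv]; norm_num

theorem rpow_half_eq_ofReal_sqrt {t : ℝ≥0∞} (ht : t ≠ ∞) :
    t ^ (1 / 2 : ℝ) = ENNReal.ofReal (Real.sqrt t.toReal) := by
  rw [Real.sqrt_eq_rpow, ← ENNReal.ofReal_rpow_of_nonneg ENNReal.toReal_nonneg (by norm_num),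
    ENNReal.ofReal_toReal ht]

theorem statement6 (σ w : Measure ℝ) [IsLocallyFiniteMeasure σ] [IsLocallyFiniteMeasure w]
    (A' : ℝ) (hA' : 0 ≤ A') (hA2 : A2star w σ A')
    (I J : Set ℝ) (hI : I.OrdConnected) (hIbdd : Bornology.IsBounded I)
    (hJ : J.OrdConnected) (hJne : J.Nonempty) (hJbdd : Bornology.IsBounded J)
    -- `I ⊆ (3J)ᶜ`:
    (hIJ : ∀ y ∈ I, (3 / 2) * (sSup J - sInf J) < |y - (sInf J + sSup J) / 2|) :
    ∫⁻ x in J, (∫⁻ y in I, ENNReal.ofReal |x - y|⁻¹ ∂σ) ∂w ≤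
      ENNReal.ofReal ((3 / 2) * A' * Real.sqrt (σ I).toReal * Real.sqrt (w J).toReal) := by
  have hσ : σ I ≠ ∞ := hIbdd.measure_lt_top.ne
  have hw : w J ≠ ∞ := hJbdd.measure_lt_top.ne
  have hlo : ∀ x ∈ J, sInf J ≤ x := fun x hx => csInf_le hJbdd.bddBelow hx
  have hhi : ∀ x ∈ J, x ≤ sSup J := fun x hx => le_csSup hJbdd.bddAbove hx
  have hsub : I ⊆ Jᶜ := by
    intro y hy hyJ
    have h1 := hIJ y hy
    have h2 := hlo y hyJ
    have h3 := hhi y hyJ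
    have h4 : |y - (sInf J + sSup J) / 2| ≤ (sSup J - sInf J) / 2 := by
      rw [abs_le]; constructor <;> linarith
    linarith
  have hA := hA2 J hJ hJbdd
  have hker : ∀ x ∈ J, ∀ y ∈ I, |x - y|⁻¹ ≤ (3 / 2) * |y - (sInf J + sSup J) / 2|⁻¹ :=
    fun x hx y hy => kernel_bound (hlo x hx) (hhi x hx) (hIJ y hy)
  generalize (sInf J + sSup J) / 2 = c at hA hker
  set f : ℝ → ℝ≥0∞ := fun y => ENNReal.ofReal |y - c|⁻¹ with hf
  have hfm : Measurable f := by fun_prop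
  set K := ∫⁻ y in Jᶜ, ENNReal.ofReal (((y - c) ^ 2)⁻¹) ∂σ with hK
  have hfsq : ∀ y, f y ^ (2 : ℝ) = ENNReal.ofReal (((y - c) ^ 2)⁻¹) := by
    intro y
    rw [hf, ENNReal.rpow_two, ← ENNReal.ofReal_pow (by positivity), inv_pow, sq_abs]
  have hCS : ∫⁻ y in I, f y ∂σ ≤ K ^ (1 / 2 : ℝ) * (σ I) ^ (1 / 2 : ℝ) := by
    have h := ENNReal.lintegral_mul_le_Lp_mul_Lq (σ.restrict I) Real.HolderConjugate.two_two
      hfm.aemeasurable (aemeasurable_const (b := (1 : ℝ≥0∞)))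
    simp only [Pi.mul_apply, mul_one, hfsq, ENNReal.one_rpow, lintegral_one,
      Measure.restrict_apply_univ] at h
    refine h.trans ?_
    gcongr
    exact lintegral_mono_set hsub
  have hinner : ∀ x ∈ J, ∫⁻ y in I, ENNReal.ofReal |x - y|⁻¹ ∂σ ≤
      ENNReal.ofReal (3 / 2) * ∫⁻ y in I, f y ∂σ := by
    intro x hx
    rw [← lintegral_const_mul _ hfm]
    refine setLIntegral_mono' hI.measurableSet fun y hy => ?_
    rw [hf, ← ENNReal.ofReal_mul (by norm_num)]
    exact ENNReal.ofReal_le_ofReal (hker x hx y hy)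
  have hAhalf : (w J) ^ (1 / 2 : ℝ) * K ^ (1 / 2 : ℝ) ≤ ENNReal.ofReal A' := by
    rw [← ENNReal.mul_rpow_of_nonneg _ _ (by norm_num)]
    refine (ENNReal.rpow_le_rpow hA (by norm_num)).trans_eq ?_
    rw [rpow_half_eq_ofReal_sqrt ENNReal.ofReal_ne_top,
      ENNReal.toReal_ofReal (by positivity), Real.sqrt_sq hA']
  have hwsplit : w J = (w J) ^ (1 / 2 : ℝ) * (w J) ^ (1 / 2 : ℝ) := by
    rw [← ENNReal.rpow_add_of_nonneg _ _ (by norm_num) (by norm_num)]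
    norm_num
  calc ∫⁻ x in J, (∫⁻ y in I, ENNReal.ofReal |x - y|⁻¹ ∂σ) ∂w
      ≤ ∫⁻ _ in J, (ENNReal.ofReal (3 / 2) * ∫⁻ y in I, f y ∂σ) ∂w :=
        setLIntegral_mono' hJ.measurableSet hinner
    _ = ENNReal.ofReal (3 / 2) * (∫⁻ y in I, f y ∂σ) * w J := setLIntegral_const _ _
    _ ≤ ENNReal.ofReal (3 / 2) * (K ^ (1 / 2 : ℝ) * (σ I) ^ (1 / 2 : ℝ)) * w J := by gcongr
    _ = ENNReal.ofReal (3 / 2) * ((w J) ^ (1 / 2 : ℝ) * K ^ (1 / 2 : ℝ)) *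
          (σ I) ^ (1 / 2 : ℝ) * (w J) ^ (1 / 2 : ℝ) := by
        nth_rewrite 1 [hwsplit]
        ring
    _ ≤ ENNReal.ofReal (3 / 2) * ENNReal.ofReal A' *
          (σ I) ^ (1 / 2 : ℝ) * (w J) ^ (1 / 2 : ℝ) := by gcongr
    _ = ENNReal.ofReal ((3 / 2) * A' * Real.sqrt (σ I).toReal * Real.sqrt (w J).toReal) := by
        rw [rpow_half_eq_ofReal_sqrt hσ, rpow_half_eq_ofReal_sqrt hw,
          ← ENNReal.ofReal_mul (by norm_num), ← ENNReal.ofReal_mul (by positivity),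
          ← ENNReal.ofReal_mul (by positivity)]
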